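/- For all ε₀* > 0 and C* > 0 there exists a constant C̃₇ > 0, depending only on ε₀* and C*, with the following property. Let N ≥ 1 (h = 1/N), let Δt > 0, and let N̂^{m+1}, N̂^m, n^{m+1}, n^m be periodic grid functions with ε₀* ≤ N̂^{m+1}(i,j,k) ≤ C* and ε₀* ≤ N̂^m(i,j,k) ≤ C* for all (i,j,k), ‖N̂^{m+1} − N̂^m‖_∞ ≤ C*·Δt, n^{m+1}(i,j,k) ≥ ε₀*/2 and n^m(i,j,k) ≥ ε₀*/2 for all (i,j,k), ‖N̂^{m+1} − n^{m+1}‖_∞ ≤ Δt, and ‖N̂^m − n^m‖_∞ ≤ Δt. Set ñ^{m+1} = N̂^{m+1} − n^{m+1} and ñ^m = N̂^m − n^m. Then ⟨ñ^{m+1} − ñ^m, (ln N̂^{m+1} − ln n^{m+1}) − (ln N̂^m − ln n^m)⟩ ≥ −C̃₇·Δt·(‖ñ^{m+1}‖₂² + ‖ñ^m‖₂²). -/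

import Mathlib

open scoped BigOperators

/-- The periodic grid of indices: `(ZMod N)^3`. -/
abbrev GridIdx (N : ℕ) := ZMod N × ZMod N × ZMod N

namespace PNP

/-- Shift the first index by `a`. -/
def xsh {N : ℕ} (p : GridIdx N) (a : ZMod N) : GridIdx N := (p.1 + a, p.2.1, p.2.2)
/-- Shift the second index by `a`. -/
def ysh {N : ℕ} (p : GridIdx N) (a : ZMod N) : GridIdx N := (p.1, p.2.1 + a, p.2.2)
/-- Shift the third index by `a`. -/
def zsh {N : ℕ} (p : GridIdx N) (a : ZMod N) : GridIdx N := (p.1, p.2.1, p.2.2 + a)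

/-- Forward difference in `x`: `(D_x f)(p) = (f(p + e_x) - f(p)) / h` with `h = 1/N`. -/
noncomputable def Dx (N : ℕ) (f : GridIdx N → ℝ) : GridIdx N → ℝ :=
  fun p => (f (xsh p 1) - f p) * N
/-- Forward difference in `y`. -/
noncomputable def Dy (N : ℕ) (f : GridIdx N → ℝ) : GridIdx N → ℝ :=
  fun p => (f (ysh p 1) - f p) * N
/-- Forward difference in `z`. -/
noncomputable def Dz (N : ℕ) (f : GridIdx N → ℝ) : GridIdx N → ℝ :=
  fun p => (f (zsh p 1) - f p) * N

/-- Backward difference in `x`: `(d_x f)(p) = (f(p) - f(p - e_x)) / h`. -/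
noncomputable def dxm (N : ℕ) (f : GridIdx N → ℝ) : GridIdx N → ℝ :=
  fun p => (f p - f (xsh p (-1))) * N
/-- Backward difference in `y`. -/
noncomputable def dym (N : ℕ) (f : GridIdx N → ℝ) : GridIdx N → ℝ :=
  fun p => (f p - f (ysh p (-1))) * N
/-- Backward difference in `z`. -/
noncomputable def dzm (N : ℕ) (f : GridIdx N → ℝ) : GridIdx N → ℝ :=
  fun p => (f p - f (zsh p (-1))) * N

/-- Forward average in `x`: `(A_x f)(p) = (f(p + e_x) + f(p)) / 2`. -/
noncomputable def Ax (N : ℕ) (f : GridIdx N → ℝ) : GridIdx N → ℝ :=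
  fun p => (f (xsh p 1) + f p) / 2
/-- Forward average in `y`. -/
noncomputable def Ay (N : ℕ) (f : GridIdx N → ℝ) : GridIdx N → ℝ :=
  fun p => (f (ysh p 1) + f p) / 2
/-- Forward average in `z`. -/
noncomputable def Az (N : ℕ) (f : GridIdx N → ℝ) : GridIdx N → ℝ :=
  fun p => (f (zsh p 1) + f p) / 2

/-- The discrete Laplacian `Δ_h f = d_x(D_x f) + d_y(D_y f) + d_z(D_z f)`. -/
noncomputable def lap (N : ℕ) (f : GridIdx N → ℝ) : GridIdx N → ℝ :=
  fun p => dxm N (Dx N f) p + dym N (Dy N f) p + dzm N (Dz N f) p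

/-- The discrete inner product `⟨f, g⟩ = h³ ∑ f·g` with `h = 1/N`. -/
noncomputable def ip (N : ℕ) [NeZero N] (f g : GridIdx N → ℝ) : ℝ :=
  ((1 : ℝ) / N) ^ 3 * ∑ p : GridIdx N, f p * g p

/-- The discrete `L²` norm `‖f‖₂ = ⟨f, f⟩^{1/2}`. -/
noncomputable def l2 (N : ℕ) [NeZero N] (f : GridIdx N → ℝ) : ℝ :=
  Real.sqrt (ip N f f)

/-- The discrete maximum norm `‖f‖_∞ = max |f|`. -/
noncomputable def linf (N : ℕ) [NeZero N] (f : GridIdx N → ℝ) : ℝ :=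
  ⨆ p : GridIdx N, |f p|

/-- A grid function has zero mean if its values sum to zero. -/
def zeroMean (N : ℕ) [NeZero N] (f : GridIdx N → ℝ) : Prop :=
  ∑ p : GridIdx N, f p = 0

/-- With `F(x) = x·ln x`, the difference quotient `G¹_a(x) = (F(x) - F(a))/(x - a)`
for `x ≠ a`, with value `F'(a) = ln a + 1` at `x = a`. -/
noncomputable def G1 (a x : ℝ) : ℝ :=
  if x = a then Real.log a + 1
  else (x * Real.log x - a * Real.log a) / (x - a)

end PNP

open PNP

/-! At a grid point let `a, b` be the values of the reference density and `n, m` those of the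
numerical one, at the new and the old time level, and let `e = a - n`, `f = b - m` be the errors.
One application of the mean value theorem, to the difference of the logarithms along the segments
from `b` to `a` and from `m` to `n` with a common parameter `s`, turns the product to be bounded
into
`(e - f) ((a - b)/A - (n - m)/M) = (e - f)²/M - (a - b) (e - f) (A - M)/(A M)`,
where `A = b + s (a - b)` and `M = m + s (n - m)`. The first term is nonnegative. Because `A` and
`M` share the parameter `s`, the difference `A - M` is a convex combination of `e` and `f`, so the
second term is quadratic in the errors, with the small factor `a - b = O(Δt)`. -/

open AffineMap Set

lemma exists_sub_sub_sub_eq_deriv_lineMap {f f' : ℝ → ℝ} {D : Set ℝ} (hD : Convex ℝ D)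
    (hf : ∀ x ∈ D, HasDerivAt f (f' x) x) {a b n m : ℝ} (ha : a ∈ D) (hb : b ∈ D) (hn : n ∈ D)
    (hm : m ∈ D) :
    ∃ s ∈ Icc (0 : ℝ) 1,
      f a - f n - (f b - f m) = f' (lineMap b a s) * (a - b) - f' (lineMap m n s) * (n - m) := by
  have hderiv : ∀ s ∈ Icc (0 : ℝ) 1, HasDerivAt (fun s ↦ f (lineMap b a s) - f (lineMap m n s))
      (f' (lineMap b a s) * (a - b) - f' (lineMap m n s) * (n - m)) s := fun s hs ↦
    ((hf _ (hD.lineMap_mem hb ha hs)).comp s hasDerivAt_lineMap).sub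
      ((hf _ (hD.lineMap_mem hm hn hs)).comp s hasDerivAt_lineMap)
  obtain ⟨s, hs, hslope⟩ := exists_hasDerivAt_eq_slope _ _ zero_lt_one
    (fun s hs ↦ (hderiv s hs).continuousAt.continuousWithinAt)
    (fun s hs ↦ hderiv s (Ioo_subset_Icc_self hs))
  refine ⟨s, Ioo_subset_Icc_self hs, ?_⟩
  simp only [lineMap_apply_one, lineMap_apply_zero, sub_zero, div_one] at hslope
  rw [hslope]

lemma lineMap_sq_le_sq_add_sq {s : ℝ} (hs : s ∈ Icc (0 : ℝ) 1) (x y : ℝ) :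
    lineMap y x s ^ 2 ≤ x ^ 2 + y ^ 2 := by
  obtain ⟨hs0, hs1⟩ := hs
  have hconvex : lineMap y x s ^ 2 = (1 - s) * y ^ 2 + s * x ^ 2 - s * (1 - s) * (x - y) ^ 2 := by
    rw [lineMap_apply_ring]
    ring
  have hdefect : 0 ≤ s * (1 - s) * (x - y) ^ 2 :=
    mul_nonneg (mul_nonneg hs0 (sub_nonneg.2 hs1)) (sq_nonneg _)
  have hy : (1 - s) * y ^ 2 ≤ y ^ 2 := mul_le_of_le_one_left (sq_nonneg y) (sub_le_self 1 hs0)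
  have hx : s * x ^ 2 ≤ x ^ 2 := mul_le_of_le_one_left (sq_nonneg x) hs1
  linarith

lemma abs_sub_mul_lineMap_le {s : ℝ} (hs : s ∈ Icc (0 : ℝ) 1) (x y : ℝ) :
    |(x - y) * lineMap y x s| ≤ 3 / 2 * (x ^ 2 + y ^ 2) := by
  have hYoung : 2 * |(x - y) * lineMap y x s| ≤ (x - y) ^ 2 + lineMap y x s ^ 2 := by
    simpa only [abs_mul, sq_abs, mul_assoc] using two_mul_le_add_sq |x - y| |lineMap y x s|
  linarith [lineMap_sq_le_sq_add_sq hs x y, sub_sq x y, add_sq x y, sq_nonneg (x + y)]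

lemma neg_mul_div_le_mul_inv_mul_sub_inv_mul {α β K c d x A M : ℝ} (hα : 0 < α) (hβ : 0 < β)
    (hA : α ≤ A) (hM : β ≤ M) (hd : |d| ≤ K) (hx : |x * (A - M)| ≤ c) :
    -(K * c / (α * β)) ≤ x * (A⁻¹ * d - M⁻¹ * (d - x)) := by
  have hA0 : 0 < A := hα.trans_le hA
  have hM0 : 0 < M := hβ.trans_le hM
  have hK : 0 ≤ K := (abs_nonneg d).trans hd
  have hc : 0 ≤ c := (abs_nonneg _).trans hx
  have hsplit : x * (A⁻¹ * d - M⁻¹ * (d - x)) = x ^ 2 / M - d * (x * (A - M)) / (A * M) := by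
    field_simp
    ring
  have hcross : d * (x * (A - M)) / (A * M) ≤ K * c / (α * β) :=
    calc d * (x * (A - M)) / (A * M)
        ≤ |d| * |x * (A - M)| / (A * M) := by
          rw [← abs_mul]
          gcongr
          exact le_abs_self _
      _ ≤ K * c / (α * β) := by gcongr
  have hsq : 0 ≤ x ^ 2 / M := by positivity
  linarith

lemma neg_mul_sq_add_sq_le_sub_mul_log_sub_log {α β K a b n m : ℝ} (hα : 0 < α) (hβ : 0 < β)
    (ha : α ≤ a) (hb : α ≤ b) (hn : β ≤ n) (hm : β ≤ m) (hab : |a - b| ≤ K) :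
    -(3 * K / (2 * (α * β)) * ((a - n) ^ 2 + (b - m) ^ 2)) ≤
      (a - n - (b - m)) * (Real.log a - Real.log n - (Real.log b - Real.log m)) := by
  obtain ⟨s, hs, hlog⟩ := exists_sub_sub_sub_eq_deriv_lineMap (convex_Ioi (0 : ℝ))
    (fun x hx ↦ Real.hasDerivAt_log (ne_of_gt hx)) (hα.trans_le ha) (hα.trans_le hb)
    (hβ.trans_le hn) (hβ.trans_le hm)
  have hA : α ≤ lineMap b a s := (convex_Ici α).lineMap_mem hb ha hs
  have hM : β ≤ lineMap m n s := (convex_Ici β).lineMap_mem hm hn hs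
  have hAM : lineMap b a s - lineMap m n s = lineMap (b - m) (a - n) s := by
    simp only [lineMap_apply_ring]
    ring
  have hcross : |(a - n - (b - m)) * (lineMap b a s - lineMap m n s)| ≤
      3 / 2 * ((a - n) ^ 2 + (b - m) ^ 2) := hAM ▸ abs_sub_mul_lineMap_le hs _ _
  have hnm : n - m = a - b - (a - n - (b - m)) := by ring
  calc -(3 * K / (2 * (α * β)) * ((a - n) ^ 2 + (b - m) ^ 2))
      = -(K * (3 / 2 * ((a - n) ^ 2 + (b - m) ^ 2)) / (α * β)) := by
        field_simp
    _ ≤ (a - n - (b - m)) * (Real.log a - Real.log n - (Real.log b - Real.log m)) := by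
        rw [hlog, hnm]
        exact neg_mul_div_le_mul_inv_mul_sub_inv_mul hα hβ hA hM hab hcross

namespace PNP

variable {N : ℕ} [NeZero N]

lemma abs_le_linf (f : GridIdx N → ℝ) (p : GridIdx N) : |f p| ≤ linf N f :=
  le_ciSup (f := fun p ↦ |f p|) (finite_range _).bddAbove p

lemma l2_sq (f : GridIdx N → ℝ) : l2 N f ^ 2 = (1 / N : ℝ) ^ 3 * ∑ p, f p ^ 2 := by
  simp only [l2, ip, ← sq]
  exact Real.sq_sqrt (by positivity)

lemma neg_mul_l2_sq_add_l2_sq_le_ip {C : ℝ} {f g u v : GridIdx N → ℝ}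
    (h : ∀ p, -(C * (f p ^ 2 + g p ^ 2)) ≤ u p * v p) :
    -(C * (l2 N f ^ 2 + l2 N g ^ 2)) ≤ ip N u v := by
  calc -(C * (l2 N f ^ 2 + l2 N g ^ 2))
      = (1 / N : ℝ) ^ 3 * ∑ p, -(C * (f p ^ 2 + g p ^ 2)) := by
        rw [l2_sq, l2_sq, Finset.sum_neg_distrib, ← Finset.mul_sum, Finset.sum_add_distrib]
        ring
    _ ≤ ip N u v := by
        unfold ip
        gcongr with p
        exact h p

end PNP

theorem stmt17_general {N : ℕ} [NeZero N] {α β K : ℝ} (hα : 0 < α) (hβ : 0 < β)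
    {Nh1 Nh0 n1 n0 : GridIdx N → ℝ} (hNh1 : ∀ p, α ≤ Nh1 p) (hNh0 : ∀ p, α ≤ Nh0 p)
    (hK : linf N (fun p ↦ Nh1 p - Nh0 p) ≤ K) (hn1 : ∀ p, β ≤ n1 p) (hn0 : ∀ p, β ≤ n0 p) :
    -(3 * K / (2 * (α * β)) *
        (l2 N (fun p ↦ Nh1 p - n1 p) ^ 2 + l2 N (fun p ↦ Nh0 p - n0 p) ^ 2)) ≤
      ip N (fun p ↦ (Nh1 p - n1 p) - (Nh0 p - n0 p))
        (fun p ↦ (Real.log (Nh1 p) - Real.log (n1 p)) - (Real.log (Nh0 p) - Real.log (n0 p))) :=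
  neg_mul_l2_sq_add_l2_sq_le_ip fun p ↦
    neg_mul_sq_add_sq_le_sub_mul_log_sub_log hα hβ (hNh1 p) (hNh0 p) (hn1 p) (hn0 p)
      ((abs_le_linf _ p).trans hK)

/-- Refined estimate for the regularization inner product with the
discrete temporal derivative of the error. -/
theorem stmt17 (ε Cs : ℝ) (hε : 0 < ε) (hCs : 0 < Cs) :
    ∃ C7 : ℝ, 0 < C7 ∧
      ∀ (N : ℕ) [NeZero N], ∀ dt : ℝ, 0 < dt →
      ∀ Nh1 Nh0 n1 n0 : GridIdx N → ℝ,
        (∀ p, ε ≤ Nh1 p ∧ Nh1 p ≤ Cs) →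
        (∀ p, ε ≤ Nh0 p ∧ Nh0 p ≤ Cs) →
        linf N (fun p => Nh1 p - Nh0 p) ≤ Cs * dt →
        (∀ p, ε / 2 ≤ n1 p) → (∀ p, ε / 2 ≤ n0 p) →
        linf N (fun p => Nh1 p - n1 p) ≤ dt →
        linf N (fun p => Nh0 p - n0 p) ≤ dt →
        -(C7 * dt * ((l2 N (fun p => Nh1 p - n1 p)) ^ 2
            + (l2 N (fun p => Nh0 p - n0 p)) ^ 2))
          ≤ ip N (fun p => (Nh1 p - n1 p) - (Nh0 p - n0 p))
              (fun p => (Real.log (Nh1 p) - Real.log (n1 p))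
                - (Real.log (Nh0 p) - Real.log (n0 p))) := by
  refine ⟨3 * Cs / ε ^ 2, by positivity, fun N _ dt _ Nh1 Nh0 n1 n0 h1 h0 hd hn1 hn0 _ _ ↦ ?_⟩
  have hconst : 3 * Cs / ε ^ 2 * dt = 3 * (Cs * dt) / (2 * (ε * (ε / 2))) := by field_simp
  exact hconst ▸ stmt17_general hε (half_pos hε) (fun p ↦ (h1 p).1) (fun p ↦ (h0 p).1) hd hn1 hn0
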